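/- arXiv:1507.06752 — 2 statements merged into one kernel-verified Lean document; each statement's English description precedes it below -/
import Mathlib

section
/- Let G be an abelian group generated (as a group) by a submonoid P, let Q ⊆ P be a submonoid, and let H be the subgroup of G generated by Q. If P is a finitely generated Q-module (there is a finite subset S ⊆ P with every p ∈ P of the form q + s, q ∈ Q, s ∈ S), then the quotient group G ⧸ H is finite. -/
/-!
Each element of a submonoid `P` of `G` maps a `P`-orbit injectively into itself. If the orbit is
finite, every element of `P` therefore permutes it, and hence so does the subgroup generated by `P`.
Apply this to the action of `G` on `G ⧸ H` when `P` generates `G`: as soon as the `P`-orbit of the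
base point, which is the image of `P`, is finite, it is all of `G ⧸ H`. If `P ⊆ S + H`, then this
image is contained in the image of `S`.
-/

open scoped Pointwise

section Orbit

variable {G X : Type*} [Group G] [MulAction G X] {P : Submonoid G} {x : X}

@[to_additive]
theorem subgroupClosure_le_stabilizer_orbit_submonoid (hfin : (MulAction.orbit P x).Finite) :
    Subgroup.closure (P : Set G) ≤ MulAction.stabilizer G (MulAction.orbit P x) :=
  (Subgroup.closure_le _).2 fun p hp ↦
    (MulAction.mem_stabilizer_set_iff_smul_set_subset hfin).2 <|
      MulAction.smul_orbit_subset (⟨p, hp⟩ : P) x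

@[to_additive]
theorem orbit_submonoid_eq_orbit_of_finite (hgen : Subgroup.closure (P : Set G) = ⊤)
    (hfin : (MulAction.orbit P x).Finite) : MulAction.orbit P x = MulAction.orbit G x := by
  refine (MulAction.orbit_submonoid_subset P x).antisymm ?_
  rintro _ ⟨g, rfl⟩
  have hg : g ∈ MulAction.stabilizer G (MulAction.orbit P x) :=
    subgroupClosure_le_stabilizer_orbit_submonoid hfin (hgen ▸ Subgroup.mem_top g)
  exact (MulAction.mem_stabilizer_set.1 hg x).2 (MulAction.mem_orbit_self x)

end Orbit

section Quotient

variable {G : Type*} [Group G]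

@[to_additive]
theorem orbit_submonoid_mk_one (P : Submonoid G) (H : Subgroup G) :
    MulAction.orbit P ((1 : G) : G ⧸ H) = ((↑) : G → G ⧸ H) '' P := by
  ext y
  simp [MulAction.mem_orbit_iff, Submonoid.smul_def]

@[to_additive]
theorem image_mk_submonoid_eq_univ_of_finite {P : Submonoid G} {H : Subgroup G}
    (hgen : Subgroup.closure (P : Set G) = ⊤) (hfin : (((↑) : G → G ⧸ H) '' P).Finite) :
    ((↑) : G → G ⧸ H) '' P = Set.univ := by
  rw [← orbit_submonoid_mk_one] at hfin ⊢
  rw [orbit_submonoid_eq_orbit_of_finite hgen hfin, MulAction.orbit_eq_univ]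

@[to_additive]
theorem image_mk_subset_of_subset_mul {H : Subgroup G} {A S : Set G} (hAS : A ⊆ S * H) :
    ((↑) : G → G ⧸ H) '' A ⊆ (↑) '' S := by
  rintro _ ⟨a, ha, rfl⟩
  obtain ⟨s, hs, h, hh, rfl⟩ := hAS ha
  exact ⟨s, hs, (QuotientGroup.mk_mul_of_mem s hh).symm⟩

end Quotient

theorem quotient_group_finite_of_finite_module_general {G : Type*} [AddGroup G]
    {P : AddSubmonoid G} (hgen : AddSubgroup.closure (P : Set G) = ⊤) {H : AddSubgroup G}
    {S : Set G} (hS : S.Finite) (hPS : (P : Set G) ⊆ S + H) :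
    Finite (G ⧸ H) := by
  have hfin : (((↑) : G → G ⧸ H) '' P).Finite :=
    (hS.image _).subset (image_mk_subset_of_subset_add hPS)
  rw [← Set.finite_univ_iff, ← image_mk_addSubmonoid_eq_univ_of_finite hgen hfin]
  exact hfin

/-- If an abelian group `G` is generated (as a group) by a submonoid `P`, `Q ⊆ P` is a
submonoid, `H` is the subgroup generated by `Q`, and `P` is a finitely generated
`Q`-module, then the quotient group `G ⧸ H` (realizing `P^gp ⧸ Q^gp`) is finite. -/
theorem quotient_group_finite_of_finite_module
    (G : Type*) [AddCommGroup G] (P Q : AddSubmonoid G) (hQP : Q ≤ P)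
    (hgen : AddSubgroup.closure (P : Set G) = ⊤)
    (S : Finset G) (hSP : ↑S ⊆ (P : Set G))
    (hmod : ∀ p ∈ P, ∃ q ∈ Q, ∃ s ∈ S, p = q + s) :
    Finite (G ⧸ AddSubgroup.closure (Q : Set G)) := by
  refine quotient_group_finite_of_finite_module_general hgen S.finite_toSet fun p hp ↦ ?_
  obtain ⟨q, hq, s, hs, rfl⟩ := hmod p hp
  exact ⟨s, hs, q, AddSubgroup.subset_closure hq, add_comm s q⟩
end

section
/- Smoothness criterion for monoid algebras: Let P be a fine monoid. The ℂ-algebra ℂ[P] = AddMonoidAlgebra ℂ P is smooth over ℂ (in Mathlib's sense: formally smooth and of finite presentation) if and only if the sharpening P̄ = P/P* is a free commutative monoid, i.e., isomorphic to ℕ^r for some r ∈ ℕ; equivalently (for fine P), if and only if there exist r ∈ ℕ and an isomorphism of monoids P ≅ P* × ℕ^r, where P* denotes the group of additive units of P. -/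
/-!
Over a `ℚ`-algebra `R`, group algebras are formally smooth: if `I² = 0`, the kernel `1 + I ≅ I` of
`Bˣ → (B/I)ˣ` is divisible, hence injective, so this surjection splits and characters lift along
`B → B/I`. Hence `R[P* × ℕʳ]`, a polynomial ring over `R[P*]`, is formally smooth.

Conversely, let `T` be a minimal finite set of generators of `P` modulo `P*`, and let `K` be the
kernel of the surjection `R[P* × ℕ^T] → R[P]`. By minimality and cancellation, `P* × ℕ^T → P`
identifies no element of degree at most one with another one, so `K ⊆ I²` for the ideal `I` spanned
by the monomials of positive degree. If `R[P]` is formally smooth, the surjection splits modulo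
`I K`; as `K ⊆ I²`, this forces `K = I K`, whence `K ⊆ ⋂ Iⁿ = 0`.
-/

open AddMonoidAlgebra

theorem exists_section_of_exact_of_divisibleBy {A E G : Type*} [AddCommGroup A] [AddCommGroup E]
    [AddCommGroup G] [DivisibleBy A ℤ] {i : A →+ E} {p : E →+ G} (hi : Function.Injective i)
    (hp : Function.Surjective p) (hip : Function.Exact i p) :
    ∃ s : G →+ E, p.comp s = AddMonoidHom.id G := by
  have hretraction : ∃ ρ, ρ ∘ₗ i.toIntLinearMap = LinearMap.id :=
    (Module.Baer.of_divisible A).extension_property i.toIntLinearMap hi LinearMap.id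
  have hexact : Function.Exact i.toIntLinearMap p.toIntLinearMap := hip
  obtain ⟨-, s, hs⟩ := (hexact.split_tfae'.out 0 1 rfl rfl).mpr ⟨hp, hretraction⟩
  exact ⟨s.toAddMonoidHom, congr(($hs).toAddMonoidHom)⟩

section UnitsOfSquareZero

variable {B : Type*} [CommRing B] {I : Ideal B}

/-- The parametrisation `x ↦ 1 + x` of the units congruent to `1` modulo a square-zero ideal `I`.
The units are written additively, so that divisibility of `I` can be used. -/
def oneAddUnits (hI : I ^ 2 = ⊥) : I →+ Additive Bˣ :=
  MonoidHom.toAdditiveRight (MonoidHom.toHomUnits (G := Multiplicative I)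
    { toFun := fun x ↦ 1 + (x.toAdd : B)
      map_one' := by simp
      map_mul' := fun x y ↦ by
        have hxy : (x.toAdd : B) * y.toAdd = 0 := by
          rw [← Ideal.mem_bot, ← hI, pow_two]
          exact Ideal.mul_mem_mul x.toAdd.2 y.toAdd.2
        rw [toAdd_mul, Submodule.coe_add]
        linear_combination -hxy })

@[simp]
theorem coe_oneAddUnits (hI : I ^ 2 = ⊥) (x : I) :
    ((oneAddUnits hI x).toMul : B) = 1 + x := rfl

theorem oneAddUnits_injective (hI : I ^ 2 = ⊥) : Function.Injective (oneAddUnits hI) := by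
  intro x y hxy
  exact Subtype.ext (by simpa using congr(((Additive.toMul $hxy : Bˣ) : B)))

theorem exact_oneAddUnits (hI : I ^ 2 = ⊥) :
    Function.Exact (oneAddUnits hI)
      (MonoidHom.toAdditive (Units.map (Ideal.Quotient.mk I : B →* B ⧸ I))) := by
  intro u
  rw [← ofMul_toMul u]
  set u := u.toMul
  have hmem : Units.map (Ideal.Quotient.mk I : B →* B ⧸ I) u = 1 ↔ (u : B) - 1 ∈ I := by
    rw [Units.ext_iff, ← Ideal.Quotient.eq]
    simp
  refine hmem.trans ⟨fun hu ↦ ⟨⟨u - 1, hu⟩, Additive.toMul.injective (Units.ext ?_)⟩, ?_⟩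
  · simp
  · rintro ⟨x, hx⟩
    have hu : 1 + (x : B) = u := by simpa using congr(((Additive.toMul $hx : Bˣ) : B))
    simp [← hu]

theorem units_map_quotientMk_surjective (hI : IsNilpotent I) :
    Function.Surjective (Units.map (Ideal.Quotient.mk I : B →* B ⧸ I)) :=
  IsLocalRing.surjective_units_map_of_local_ringHom _ Ideal.Quotient.mk_surjective
    ⟨fun _ ↦ hI.isUnit_quotient_mk_iff.mp⟩

theorem exists_section_units_map_quotientMk [Algebra ℚ B] (hI : I ^ 2 = ⊥) :
    ∃ s : (B ⧸ I)ˣ →* Bˣ, ∀ u, Units.map (Ideal.Quotient.mk I : B →* B ⧸ I) (s u) = u := by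
  let _ : DivisibleBy I ℤ :=
    { div := fun x n ↦ (n : ℚ)⁻¹ • x
      div_zero := by simp
      div_cancel := fun {n} x hn ↦ by
        rw [← Int.cast_smul_eq_zsmul ℚ, smul_inv_smul₀ (Int.cast_ne_zero.mpr hn)] }
  obtain ⟨s, hs⟩ := exists_section_of_exact_of_divisibleBy (oneAddUnits_injective hI)
    (units_map_quotientMk_surjective ⟨2, hI⟩) (exact_oneAddUnits hI)
  exact ⟨AddMonoidHom.toMultiplicative s, DFunLike.congr_fun hs⟩

end UnitsOfSquareZero

section FormallySmooth

variable (R : Type*) [CommRing R]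

theorem formallySmooth_addMonoidAlgebra_of_addCommGroup [Algebra ℚ R] (G : Type*) [AddCommGroup G] :
    Algebra.FormallySmooth R R[G] := by
  refine .of_comp_surjective fun B _ _ I hI f ↦ ?_
  let _ : Algebra ℚ B := ((algebraMap R B).comp (algebraMap ℚ R)).toAlgebra
  obtain ⟨s, hs⟩ := exists_section_units_map_quotientMk hI
  let χ : Multiplicative G →* (B ⧸ I)ˣ := ((lift R (B ⧸ I) G).symm f).toHomUnits
  refine ⟨lift R B G ((Units.coeHom B).comp (s.comp χ)), ?_⟩
  ext x
  simpa [χ, MonoidHom.toHomUnits] using congr((($(hs (χ (.ofAdd x))) : (B ⧸ I)ˣ) : B ⧸ I))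

theorem formallySmooth_addMonoidAlgebra_prod_finsupp (M ι : Type*) [AddCommMonoid M]
    [Algebra.FormallySmooth R R[M]] : Algebra.FormallySmooth R R[M × (ι →₀ ℕ)] := by
  have : Algebra.FormallySmooth R (MvPolynomial ι R[M]) := .comp R R[M] _
  exact .of_equiv (((domCongr R R AddEquiv.prodComm).trans (curryAlgEquiv R)).symm :
    MvPolynomial ι R[M] ≃ₐ[R] R[M × (ι →₀ ℕ)])

theorem finitePresentation_addMonoidAlgebra (M : Type*) [AddCommMonoid M] [AddMonoid.FG M] :
    Algebra.FinitePresentation R R[M] := by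
  have : Algebra.FinitePresentation ℤ ℤ[M] :=
    Algebra.FinitePresentation.of_finiteType.mp inferInstance
  exact .equiv (scalarTensorEquiv ℤ R : TensorProduct ℤ R ℤ[M] ≃ₐ[R] R[M])

theorem smooth_addMonoidAlgebra_of_addEquiv [Algebra ℚ R] {M G ι : Type*} [AddCommMonoid M]
    [AddMonoid.FG M] [AddCommGroup G] [Finite ι] (e : M ≃+ G × (ι → ℕ)) :
    Algebra.Smooth R R[M] where
  formallySmooth := by
    have := formallySmooth_addMonoidAlgebra_of_addCommGroup R G
    have := formallySmooth_addMonoidAlgebra_prod_finsupp R G ι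
    let toFinsupp : (ι → ℕ) ≃+ (ι →₀ ℕ) :=
      (Finsupp.linearEquivFunOnFinite ℕ ℕ ι).symm.toAddEquiv
    exact .of_equiv (domCongr R R (e.trans ((AddEquiv.refl G).prodCongr toFinsupp))).symm
  finitePresentation := finitePresentation_addMonoidAlgebra R M

end FormallySmooth

theorem eq_of_mem_sq_of_sub_mem {A C : Type*} [CommRing A] [CommRing C] {f g : A →+* C}
    {I : Ideal A} {N : Ideal C} (hN : N ^ 2 = ⊥) (hIN : I.map f * N = ⊥)
    (hfg : ∀ a, f a - g a ∈ N) {a : A} (ha : a ∈ I ^ 2) : f a = g a := by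
  have mul_sub_eq_zero {x y : A} (hx : x ∈ I) : f x * (f y - g y) = 0 := by
    rw [← Ideal.mem_bot, ← hIN]
    exact Ideal.mul_mem_mul (Ideal.mem_map_of_mem f hx) (hfg y)
  rw [pow_two] at ha
  induction ha using Submodule.mul_induction_on' with
  | mem_mul_mem x hx y hy =>
    have hxy : (f x - g x) * (f y - g y) = 0 := by
      rw [← Ideal.mem_bot, ← hN, pow_two]
      exact Ideal.mul_mem_mul (hfg x) (hfg y)
    rw [map_mul, map_mul]
    linear_combination mul_sub_eq_zero (y := y) hx + mul_sub_eq_zero (y := x) hy - hxy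
  | add x _ y _ hx hy => rw [map_add, map_add, hx, hy]

section KernelInSquare

variable {R A B : Type*} [CommRing R] [CommRing A] [CommRing B] [Algebra R A] [Algebra R B]
  [Algebra.FormallySmooth R B] {Φ : A →ₐ[R] B} {I : Ideal A}

theorem ker_le_mul_ker_of_formallySmooth (hΦ : Function.Surjective Φ)
    (hI : RingHom.ker Φ ≤ I ^ 2) : RingHom.ker Φ ≤ I * RingHom.ker Φ := by
  set K := RingHom.ker Φ
  let π : A →ₐ[R] A ⧸ I * K := Ideal.Quotient.mkₐ R (I * K)
  let g : A ⧸ I * K →ₐ[R] B := Ideal.Quotient.liftₐ (I * K) Φ fun _ ha ↦ Ideal.mul_le_right ha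
  have hg : Function.Surjective g := .of_comp (g := π) hΦ
  have ker_g : RingHom.ker g = K.map π := Ideal.ker_quotient_lift _ _
  have map_mul_ker : I.map π * RingHom.ker g = ⊥ := by
    rw [ker_g, ← Ideal.map_mul]
    exact Ideal.map_quotient_self _
  have ker_sq : RingHom.ker g ^ 2 = ⊥ := by
    rw [eq_bot_iff, ← map_mul_ker, pow_two]
    refine Ideal.mul_mono_left ?_
    rw [ker_g]
    exact Ideal.map_mono (hI.trans (Ideal.pow_le_self two_ne_zero))
  let σ : B →ₐ[R] A ⧸ I * K :=
    Algebra.FormallySmooth.liftOfSurjective (AlgHom.id R B) g hg ⟨2, ker_sq⟩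
  have sub_mem_ker (a : A) : π a - σ (Φ a) ∈ RingHom.ker g := by
    rw [RingHom.mem_ker, map_sub, sub_eq_zero]
    exact (Algebra.FormallySmooth.liftOfSurjective_apply (AlgHom.id R B) g hg _ (Φ a)).symm
  intro a ha
  have hπ : π a = σ (Φ a) := eq_of_mem_sq_of_sub_mem (f := π.toRingHom)
    (g := (σ.comp Φ).toRingHom) ker_sq map_mul_ker sub_mem_ker (hI ha)
  rw [(ha : Φ a = 0), map_zero] at hπ
  exact Ideal.Quotient.eq_zero_iff_mem.mp hπ

theorem ker_le_pow_of_formallySmooth (hΦ : Function.Surjective Φ) (hI : RingHom.ker Φ ≤ I ^ 2)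
    (n : ℕ) : RingHom.ker Φ ≤ I ^ n := by
  induction n with
  | zero => simp
  | succ n ih =>
    rw [pow_succ']
    exact (ker_le_mul_ker_of_formallySmooth hΦ hI).trans (Ideal.mul_mono_right ih)

end KernelInSquare

theorem of'_add_eq_mul (R : Type*) {Q : Type*} [Semiring R] [AddMonoid Q] (a b : Q) :
    of' R Q (a + b) = of' R Q a * of' R Q b :=
  map_mul (of R Q) (Multiplicative.ofAdd a) (Multiplicative.ofAdd b)

theorem mapDomainAlgHom_surjective (R : Type*) {Q P : Type*} [CommSemiring R] [AddMonoid Q]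
    [AddMonoid P] {π : Q →+ P} (hπ : Function.Surjective π) :
    Function.Surjective (mapDomainAlgHom R R π) := by
  intro f
  obtain ⟨c, hc⟩ := Finsupp.mapDomain_surjective hπ f.coeff
  exact ⟨.ofCoeff c, congrArg AddMonoidAlgebra.ofCoeff hc⟩

section DegreeIdeal

variable (R : Type*) [CommRing R] {Q : Type*} [AddCommMonoid Q] (deg : Q →+ ℕ)

/-- The ideal of `R[Q]` spanned by the monomials of degree at least `n`, for a degree
function on `Q`. This separated filtration bounds the powers of `degreeIdeal R deg 1`. -/
noncomputable def degreeIdeal (n : ℕ) : Ideal R[Q] :=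
  Ideal.span (Set.image (of' R Q) {q | n ≤ deg q})

variable {R deg}

theorem of'_mem_degreeIdeal {n : ℕ} {q : Q} (hq : n ≤ deg q) : of' R Q q ∈ degreeIdeal R deg n :=
  Ideal.subset_span (Set.mem_image_of_mem _ hq)

theorem mem_degreeIdeal {n : ℕ} {f : R[Q]} :
    f ∈ degreeIdeal R deg n ↔ ∀ q ∈ f.coeff.support, n ≤ deg q := by
  rw [degreeIdeal, mem_ideal_span_of'_image]
  refine forall₂_congr fun q _ ↦ ⟨?_, fun hq ↦ ⟨q, hq, 0, (zero_add q).symm⟩⟩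
  rintro ⟨q', hq', d, rfl⟩
  rw [map_add]
  exact le_add_left hq'

theorem degreeIdeal_one_pow_le (n : ℕ) : degreeIdeal R deg 1 ^ n ≤ degreeIdeal R deg n := by
  induction n with
  | zero => exact fun f _ ↦ mem_degreeIdeal.mpr fun _ _ ↦ Nat.zero_le _
  | succ n ih =>
    rw [pow_succ]
    refine (Ideal.mul_mono_left ih).trans ?_
    rw [degreeIdeal, degreeIdeal, Ideal.span_mul_span', Ideal.span_le]
    rintro _ ⟨_, ⟨a, ha, rfl⟩, _, ⟨b, hb, rfl⟩, rfl⟩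
    change of' R Q a * of' R Q b ∈ _
    rw [← of'_add_eq_mul]
    exact of'_mem_degreeIdeal ((add_le_add ha hb).trans_eq (map_add deg a b).symm)

theorem degreeIdeal_two_le_sq
    (hsplit : ∀ q, 2 ≤ deg q → ∃ a b, 1 ≤ deg a ∧ 1 ≤ deg b ∧ a + b = q) :
    degreeIdeal R deg 2 ≤ degreeIdeal R deg 1 ^ 2 := by
  refine Ideal.span_le.mpr ?_
  rintro _ ⟨q, hq, rfl⟩
  obtain ⟨a, b, ha, hb, rfl⟩ := hsplit q hq
  rw [of'_add_eq_mul, pow_two]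
  exact Ideal.mul_mem_mul (of'_mem_degreeIdeal ha) (of'_mem_degreeIdeal hb)

variable {P : Type*} [AddCommMonoid P] {π : Q →+ P}

theorem ker_mapDomainAlgHom_le_degreeIdeal {n : ℕ}
    (hfib : ∀ q q', deg q < n → π q' = π q → q' = q) :
    RingHom.ker (mapDomainAlgHom R R π) ≤ degreeIdeal R deg n := by
  intro f hf
  refine mem_degreeIdeal.mpr fun q hq ↦ ?_
  by_contra! hdeg
  have hcoeff : (mapDomainAlgHom R R π f).coeff (π q) = f.coeff q := by
    change (Finsupp.mapDomain π f.coeff) (π q) = f.coeff q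
    rw [Finsupp.mapDomain, Finsupp.sum_apply, Finsupp.sum_eq_single q]
    · exact Finsupp.single_eq_same
    · exact fun q' _ hne ↦ Finsupp.single_eq_of_ne fun h ↦ hne (hfib q q' hdeg h.symm)
    · simp
  rw [(hf : mapDomainAlgHom R R π f = 0)] at hcoeff
  exact Finsupp.mem_support_iff.mp hq hcoeff.symm

theorem injective_of_formallySmooth_addMonoidAlgebra [Nontrivial R] [Algebra.FormallySmooth R R[P]]
    (hπ : Function.Surjective π)
    (hsplit : ∀ q, 2 ≤ deg q → ∃ a b, 1 ≤ deg a ∧ 1 ≤ deg b ∧ a + b = q)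
    (hfib : ∀ q q', deg q < 2 → π q' = π q → q' = q) : Function.Injective π := by
  have hker : RingHom.ker (mapDomainAlgHom R R π) ≤ degreeIdeal R deg 1 ^ 2 :=
    (ker_mapDomainAlgHom_le_degreeIdeal hfib).trans (degreeIdeal_two_le_sq hsplit)
  intro x y hxy
  by_contra hne
  have hmem : single x 1 - single y 1 ∈ RingHom.ker (mapDomainAlgHom R R π) := by
    rw [RingHom.mem_ker, map_sub, sub_eq_zero]
    simp [hxy]
  have hdeg : single x 1 - single y 1 ∈ degreeIdeal R deg (deg x + 1) :=
    degreeIdeal_one_pow_le _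
      (ker_le_pow_of_formallySmooth (mapDomainAlgHom_surjective R hπ) hker _ hmem)
  exact Nat.not_succ_le_self _ (mem_degreeIdeal.mp hdeg x (by simp [hne]))

end DegreeIdeal

section MinimalGenerators

variable {P : Type*} [AddCommMonoid P]

/-- `T` is a minimal set of generators of `P` modulo its additive units: `P` is generated by `T` and
`P*`, and no element of `T` can be spared. When `P/P*` is free, `T` lifts its basis. -/
structure IsMinimalGeneratingModUnits (T : Set P) : Prop where
  sup_closure : IsAddUnit.addSubmonoid P ⊔ AddSubmonoid.closure T = ⊤
  notMem : ∀ p ∈ T, p ∉ IsAddUnit.addSubmonoid P ⊔ AddSubmonoid.closure (T \ {p})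

theorem exists_finite_isMinimalGeneratingModUnits (P : Type*) [AddCommMonoid P] [AddMonoid.FG P] :
    ∃ T : Set P, T.Finite ∧ IsMinimalGeneratingModUnits T := by
  classical
  obtain ⟨S, hS⟩ := AddMonoid.FG.fg_top (M := P)
  obtain ⟨T, hT, hmin⟩ := exists_minimal_of_wellFoundedLT
    (fun T : Finset P ↦ IsAddUnit.addSubmonoid P ⊔ AddSubmonoid.closure (T : Set P) = ⊤)
    ⟨S, by rw [hS, sup_top_eq]⟩
  refine ⟨T, T.finite_toSet, hT, fun p hp hmem ↦ ?_⟩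
  have herase : IsAddUnit.addSubmonoid P ⊔ AddSubmonoid.closure (T.erase p : Set P) = ⊤ := by
    rw [eq_top_iff, ← hT, Finset.coe_erase]
    refine sup_le le_sup_left (AddSubmonoid.closure_le.mpr fun t ht ↦ ?_)
    obtain rfl | hne := eq_or_ne t p
    · exact hmem
    · exact le_sup_right (a := IsAddUnit.addSubmonoid P)
        (AddSubmonoid.subset_closure ⟨ht, hne⟩)
  exact Finset.notMem_erase p T (hmin herase (Finset.erase_subset p T) hp)

/-- The homomorphism `P* × ℕ^(T) → P` induced by the inclusions of `P*` and of `T`, the candidate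
for the splitting `P ≅ P* × ℕ^r`. -/
noncomputable def unitsProdFinsuppHom (T : Set P) : AddUnits P × (T →₀ ℕ) →+ P :=
  (AddUnits.coeHom P).coprod (Finsupp.linearCombination ℕ ((↑) : T → P)).toAddMonoidHom

variable {T : Set P}

@[simp]
theorem unitsProdFinsuppHom_apply (u : AddUnits P) (v : T →₀ ℕ) :
    unitsProdFinsuppHom T (u, v) = u + Finsupp.linearCombination ℕ ((↑) : T → P) v := rfl

end MinimalGenerators

namespace IsMinimalGeneratingModUnits

variable {P : Type*} [AddCommMonoid P] {T : Set P} (hT : IsMinimalGeneratingModUnits T)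
include hT

theorem not_isAddUnit (t : T) : ¬IsAddUnit (t : P) := fun ht ↦
  hT.notMem t t.2 (AddSubmonoid.mem_sup_left ht)

theorem eq_zero_of_isAddUnit_linearCombination {v : T →₀ ℕ}
    (hv : IsAddUnit (Finsupp.linearCombination ℕ ((↑) : T → P) v)) : v = 0 := by
  by_contra hne
  obtain ⟨t, ht⟩ := DFunLike.ne_iff.mp hne
  rw [← Finsupp.sub_add_single_one_cancel ht, map_add, Finsupp.linearCombination_single,
    one_smul] at hv
  exact hT.not_isAddUnit t (isAddUnit_of_add_isAddUnit_right hv)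

theorem apply_ne_zero_of_add_eq {t : T} {u u' : AddUnits P} {v : T →₀ ℕ}
    (h : u' + Finsupp.linearCombination ℕ ((↑) : T → P) v = u + t) : v t ≠ 0 := by
  intro hvt
  have hmem : Finsupp.linearCombination ℕ ((↑) : T → P) v ∈
      AddSubmonoid.closure (T \ {(t : P)}) := by
    rw [Finsupp.linearCombination_apply]
    refine AddSubmonoidClass.finsuppSum_mem _ v _ fun s hs ↦ nsmul_mem ?_ _
    refine AddSubmonoid.subset_closure ⟨s.2, fun hst ↦ hs ?_⟩
    rw [Subtype.ext hst, hvt]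
  refine hT.notMem t t.2
    (AddSubmonoid.mem_sup.mpr ⟨(-u + u' : AddUnits P), AddUnits.isAddUnit _, _, hmem, ?_⟩)
  rw [AddUnits.val_add, add_assoc, h, AddUnits.neg_add_cancel_left]

theorem unitsProdFinsuppHom_surjective : Function.Surjective (unitsProdFinsuppHom T) := by
  intro p
  obtain ⟨_, ⟨u, rfl⟩, c, hc, rfl⟩ :=
    AddSubmonoid.mem_sup.mp (hT.sup_closure ▸ AddSubmonoid.mem_top p)
  obtain ⟨v, rfl⟩ : ∃ v, Finsupp.linearCombination ℕ ((↑) : T → P) v = c := by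
    rw [← LinearMap.mem_range, Finsupp.range_linearCombination, Subtype.range_coe,
      ← Submodule.mem_toAddSubmonoid, Submodule.span_nat_eq_addSubmonoidClosure]
    exact hc
  exact ⟨(u, v), rfl⟩

theorem eq_of_unitsProdFinsuppHom_eq [IsCancelAdd P] {q q' : AddUnits P × (T →₀ ℕ)}
    (hq : q.2.degree < 2) (h : unitsProdFinsuppHom T q' = unitsProdFinsuppHom T q) : q' = q := by
  obtain ⟨u, v⟩ := q
  obtain ⟨u', v'⟩ := q'
  rw [unitsProdFinsuppHom_apply, unitsProdFinsuppHom_apply] at h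
  have eq_of_unit {w' : T →₀ ℕ}
      (hw : u' + Finsupp.linearCombination ℕ ((↑) : T → P) w' = u) : u' = u ∧ w' = 0 := by
    obtain rfl := hT.eq_zero_of_isAddUnit_linearCombination
      (isAddUnit_of_add_isAddUnit_right (hw ▸ u.isAddUnit))
    exact ⟨AddUnits.ext (by simpa using hw), rfl⟩
  obtain hv | hv : v.degree = 0 ∨ v.degree = 1 := by grind
  · obtain rfl := (Finsupp.degree_eq_zero_iff v).mp hv
    rw [map_zero, add_zero] at h
    obtain ⟨rfl, rfl⟩ := eq_of_unit h
    rfl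
  · obtain ⟨t, rfl⟩ : v ∈ Set.range (Finsupp.single · 1) := by
      rw [Finsupp.range_single_one]
      exact hv
    rw [Finsupp.linearCombination_single, one_smul] at h
    have hv' := Finsupp.sub_add_single_one_cancel (hT.apply_ne_zero_of_add_eq h)
    rw [← hv', map_add, Finsupp.linearCombination_single, one_smul, ← add_assoc] at h
    obtain ⟨rfl, hw⟩ := eq_of_unit (add_right_cancel h)
    rw [← hv', hw, zero_add]

end IsMinimalGeneratingModUnits

theorem exists_add_eq_of_two_le_degree {M ι : Type*} [AddCommMonoid M] {q : M × (ι →₀ ℕ)}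
    (hq : 2 ≤ q.2.degree) : ∃ a b : M × (ι →₀ ℕ), 1 ≤ a.2.degree ∧ 1 ≤ b.2.degree ∧ a + b = q := by
  obtain ⟨u, v⟩ := q
  obtain ⟨w, hwv, hw⟩ := v.exists_le_degree_eq 1 (one_le_two.trans hq)
  obtain ⟨w', rfl⟩ := le_iff_exists_add.mp hwv
  have hdeg : 2 ≤ 1 + w'.degree := by rwa [← hw, ← map_add]
  exact ⟨(u, w), (0, w'), hw.ge, Nat.le_of_add_le_add_left hdeg, by simp⟩

theorem exists_addEquiv_units_prod_of_formallySmooth (R P : Type*) [CommRing R] [Nontrivial R]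
    [AddCommMonoid P] [IsCancelAdd P] [AddMonoid.FG P] [Algebra.FormallySmooth R R[P]] :
    ∃ r : ℕ, Nonempty (P ≃+ AddUnits P × (Fin r → ℕ)) := by
  obtain ⟨T, hTfin, hT⟩ := exists_finite_isMinimalGeneratingModUnits P
  have : Finite T := hTfin
  have hinj : Function.Injective (unitsProdFinsuppHom T) :=
    injective_of_formallySmooth_addMonoidAlgebra (R := R)
      (deg := Finsupp.degree.comp (AddMonoidHom.snd (AddUnits P) (T →₀ ℕ)))
      hT.unitsProdFinsuppHom_surjective (fun _ ↦ exists_add_eq_of_two_le_degree)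
      (fun _ _ ↦ hT.eq_of_unitsProdFinsuppHom_eq)
  let e : AddUnits P × (T →₀ ℕ) ≃+ P :=
    .ofBijective (unitsProdFinsuppHom T) ⟨hinj, hT.unitsProdFinsuppHom_surjective⟩
  let reindex : (T →₀ ℕ) ≃+ (Fin (Nat.card T) → ℕ) :=
    (Finsupp.domCongr (Finite.equivFin T)).trans
      (Finsupp.linearEquivFunOnFinite ℕ ℕ (Fin (Nat.card T))).toAddEquiv
  exact ⟨Nat.card T, ⟨e.symm.trans ((AddEquiv.refl _).prodCongr reindex)⟩⟩

theorem monoid_algebra_smooth_iff_sharpening_free_general (R P : Type*) [CommRing R] [Nontrivial R]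
    [Algebra ℚ R] [AddCommMonoid P] [IsCancelAdd P] :
    Algebra.Smooth R R[P] ↔
      AddMonoid.FG P ∧ ∃ r : ℕ, Nonempty (P ≃+ AddUnits P × (Fin r → ℕ)) := by
  constructor
  · intro _
    have : AddMonoid.FG P := finiteType_iff_fg.mp (inferInstance : Algebra.FiniteType R R[P])
    exact ⟨this, exists_addEquiv_units_prod_of_formallySmooth R P⟩
  · rintro ⟨_, r, ⟨e⟩⟩
    exact smooth_addMonoidAlgebra_of_addEquiv R e

/-- **Smoothness criterion for monoid algebras.** For a fine monoid `P`, the ℂ-algebra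
`ℂ[P]` is smooth over `ℂ` iff the sharpening `P/P*` is free; equivalently (for fine `P`),
iff `P` is isomorphic as a monoid to `P* × ℕʳ` for some `r`. -/
theorem monoid_algebra_smooth_iff_sharpening_free
    (P : Type) [AddCommMonoid P] [IsCancelAdd P] (hP : AddMonoid.FG P) :
    Algebra.Smooth ℂ (AddMonoidAlgebra ℂ P) ↔
      ∃ r : ℕ, Nonempty (P ≃+ AddUnits P × (Fin r → ℕ)) := by
  exact (monoid_algebra_smooth_iff_sharpening_free_general ℂ P).trans (and_iff_right hP)
end
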